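/- arXiv:2203.05101 — 2 statements merged into one kernel-verified Lean document; each statement's English description precedes it below -/
import Mathlib

section
/- Let A be a finite-dimensional associative unital normed algebra over ℝ and let n ≥ 1. In the product space V := Fin n → A (with the product topology), the set of good points V^• := { u : Fin n → A | ∃ v : Fin n → A, Σ_i u i * v i = 1 } is open and dense in V. -/
/-!
A vector with an invertible coordinate is good, and a vector `u` is good as soon as some
`∑ i, u i * v i` is invertible. The second fact makes the good points a union of preimages of the
open set of units under continuous maps. By the first, density follows from density of the units:
the spectrum of an algebraic element `a` lies among the roots of its minimal polynomial, so
`a - t` is invertible for all but finitely many scalars `t`, in particular for some `t`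
arbitrarily close to `0`.
-/

open Topology

section Spectrum

variable {𝕜 A : Type*} [Field 𝕜] [Ring A] [Algebra 𝕜 A] {a : A}

theorem isRoot_minpoly_of_mem_spectrum {t : 𝕜} (ht : t ∈ spectrum 𝕜 a) :
    (minpoly 𝕜 a).IsRoot t := by
  have : Nontrivial A := not_subsingleton_iff_nontrivial.1 fun _ => by
    simp [spectrum.of_subsingleton] at ht
  have heval : (minpoly 𝕜 a).eval t ∈ spectrum 𝕜 (Polynomial.aeval a (minpoly 𝕜 a)) :=
    spectrum.subset_polynomial_aeval a (minpoly 𝕜 a) ⟨t, ht, rfl⟩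
  rwa [minpoly.aeval, spectrum.zero_eq] at heval

theorem finite_spectrum_of_isIntegral (ha : IsIntegral 𝕜 a) : (spectrum 𝕜 a).Finite :=
  (Polynomial.finite_setOfPred_isRoot (minpoly.ne_zero ha)).subset
    fun _ ht => isRoot_minpoly_of_mem_spectrum ht

theorem mem_closure_setOf_isUnit_of_isIntegral [TopologicalSpace 𝕜] [T1Space 𝕜]
    [∀ t : 𝕜, (𝓝[≠] t).NeBot] [TopologicalSpace A] [IsTopologicalRing A] [ContinuousSMul 𝕜 A]
    (ha : IsIntegral 𝕜 a) : a ∈ closure {b : A | IsUnit b} := by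
  have hshift : Continuous fun t : 𝕜 => a - algebraMap 𝕜 A t :=
    continuous_const.sub (continuous_algebraMap 𝕜 A)
  have hdense : Dense (spectrum 𝕜 a)ᶜ := by
    simpa only [Set.compl_eq_univ_sdiff] using
      dense_univ.sdiff_finite (finite_spectrum_of_isIntegral ha)
  have hunit : Set.MapsTo (fun t => a - algebraMap 𝕜 A t) (spectrum 𝕜 a)ᶜ {b | IsUnit b} :=
    fun t ht => IsUnit.sub_iff.1 (spectrum.notMem_iff.1 ht)
  simpa only [map_zero, sub_zero] using map_mem_closure hshift (hdense 0) hunit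

end Spectrum

section GoodPoints

variable {ι A : Type*} [Fintype ι] [Semiring A]

variable (ι A) in
/-- The good points of `A ^ ι` with respect to the standard basis: the vectors whose coordinates
generate `A` as a right ideal. The coefficients `v i` multiply on the right. -/
def goodPoints : Set (ι → A) :=
  {u | ∃ v : ι → A, ∑ i, u i * v i = 1}

theorem mem_goodPoints_iff_exists_isUnit {u : ι → A} :
    u ∈ goodPoints ι A ↔ ∃ v : ι → A, IsUnit (∑ i, u i * v i) := by
  constructor
  · rintro ⟨v, hv⟩
    exact ⟨v, hv ▸ isUnit_one⟩
  · rintro ⟨v, hv⟩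
    obtain ⟨c, hc⟩ := hv.exists_right_inv
    refine ⟨fun i => v i * c, ?_⟩
    simpa only [← mul_assoc, ← Finset.sum_mul] using hc

theorem mem_goodPoints_of_isUnit {u : ι → A} {i : ι} (hi : IsUnit (u i)) :
    u ∈ goodPoints ι A := by
  classical
  refine mem_goodPoints_iff_exists_isUnit.2 ⟨Pi.single i 1, ?_⟩
  simpa [Pi.single_apply] using hi

variable [TopologicalSpace A]

theorem isOpen_goodPoints [IsTopologicalSemiring A] [IsOpenUnits A] :
    IsOpen (goodPoints ι A) := by
  have hunits : IsOpen {a : A | IsUnit a} := IsOpenUnits.isOpenEmbedding_unitsVal.isOpen_range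
  have hunion : goodPoints ι A = ⋃ v : ι → A, {u | IsUnit (∑ i, u i * v i)} := by
    ext u
    simp only [mem_goodPoints_iff_exists_isUnit, Set.mem_iUnion, Set.mem_ofPred_eq]
  rw [hunion]
  exact isOpen_iUnion fun v => hunits.preimage (by fun_prop)

theorem dense_goodPoints [Nonempty ι] (hunits : Dense {a : A | IsUnit a}) :
    Dense (goodPoints ι A) := by
  obtain ⟨i⟩ := ‹Nonempty ι›
  exact (hunits.preimage (isOpenMap_eval i)).mono fun _ => mem_goodPoints_of_isUnit

end GoodPoints

theorem goodPoints_isOpen_and_dense_general (𝕜 A ι : Type*)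
    [Field 𝕜] [TopologicalSpace 𝕜] [T1Space 𝕜] [∀ t : 𝕜, (𝓝[≠] t).NeBot]
    [Ring A] [TopologicalSpace A] [IsTopologicalRing A] [IsOpenUnits A]
    [Algebra 𝕜 A] [ContinuousSMul 𝕜 A] [Algebra.IsIntegral 𝕜 A] [Fintype ι] [Nonempty ι] :
    IsOpen (goodPoints ι A) ∧ Dense (goodPoints ι A) :=
  ⟨isOpen_goodPoints, dense_goodPoints fun a =>
    mem_closure_setOf_isUnit_of_isIntegral (Algebra.IsIntegral.isIntegral (R := 𝕜) a)⟩

/-- The set of good points of `A^n` is open and dense. -/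
theorem goodPoints_isOpen_and_dense
    (A : Type*) [NormedRing A] [NormedAlgebra ℝ A] [FiniteDimensional ℝ A]
    (n : ℕ) (hn : 1 ≤ n) :
    IsOpen {u : Fin n → A | ∃ v : Fin n → A, ∑ i, u i * v i = 1} ∧
    Dense {u : Fin n → A | ∃ v : Fin n → A, ∑ i, u i * v i = 1} := by
  have : CompleteSpace A := FiniteDimensional.complete ℝ A
  have : IsOpenUnits A := ⟨Units.isOpenEmbedding_val⟩
  have : Nonempty (Fin n) := Fin.pos_iff_nonempty.1 hn
  exact goodPoints_isOpen_and_dense_general ℝ A (Fin n)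
end

section
/- Let D := DualNumber ℝ be the dual numbers with conjugation σ(a + bε) = a − bε, V a finite free left D-module, and B a non-degenerate σ-Hermitian form on V. Let b : Fin m → V be an orthonormal family whose D-span is a proper submodule of V (span D (range b) ≠ ⊤). Then there exists u ∈ V with B(u, u) ≠ 0 and B(b i, u) = 0 for every i. -/
/-- The conjugation `a + bε ↦ a - bε` of the dual numbers. -/
def dualConj (d : DualNumber ℝ) : DualNumber ℝ :=
  TrivSqZeroExt.inl (TrivSqZeroExt.fst d) - TrivSqZeroExt.inr (TrivSqZeroExt.snd d)

/-!
Orthonormality splits `V` as the span of the family plus its orthogonal complement `W`, and the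
form stays non-degenerate on `W`, which is nonzero because the span is proper. If every vector of
`W` were null, polarisation would give `z + σ z = 0` for every value `z` of the form on `W`, so all
these values would be killed by `ε`. By non-degeneracy `ε` then kills `W`. But `W` is a direct
summand of a flat module, hence flat, so the kernel of `ε` on `W` is `εW = 0`, and `W = 0`.
-/

open Module Submodule TrivSqZeroExt
open scoped DualNumber nonZeroDivisors

section OrthogonalComplement

variable {A V ι : Type*} [CommSemiring A] [AddCommMonoid V] [Module A V] {σ : A →+* A}
  {B : V →ₛₗ[σ] V →ₗ[A] A} {b : ι → V}

lemma mem_orthogonalBilin_span_range_iff {v : V} :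
    v ∈ (span A (Set.range b)).orthogonalBilin B ↔ ∀ i, B (b i) v = 0 := by
  refine ⟨fun hv i => hv _ (subset_span ⟨i, rfl⟩), fun hv => ?_⟩
  have hle : span A (Set.range b) ≤ LinearMap.ker (B.flip v) :=
    span_le.mpr (Set.range_subset_iff.mpr hv)
  exact hle

lemma apply_sum_smul_of_isOrthoᵢ [Fintype ι] (hb : B.IsOrthoᵢ b) (c : ι → A) (j : ι) :
    B (b j) (∑ i, c i • b i) = c j * B (b j) (b j) := by
  rw [map_sum, Finset.sum_eq_single_of_mem j (Finset.mem_univ j), map_smul, smul_eq_mul]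
  intro i _ hij
  rw [map_smul, LinearMap.isOrthoᵢ_def.mp hb j i hij.symm, smul_zero]

lemma separatingRight_domRestrict_orthogonalBilin {N : Submodule A V}
    (hN : Codisjoint N (N.orthogonalBilin B)) (hB : B.SeparatingRight) :
    (B.domRestrict₁₂ (N.orthogonalBilin B) (N.orthogonalBilin B)).SeparatingRight := by
  refine fun w hw => Subtype.ext (hB w fun v => ?_)
  obtain ⟨n, w', hn, hw', rfl⟩ := codisjoint_iff_exists_add_eq.mp hN v
  rw [map_add, LinearMap.add_apply, w.2 n hn, zero_add]
  exact hw ⟨w', hw'⟩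

end OrthogonalComplement

section OrthogonalSplitting

variable {A V ι : Type*} [CommRing A] [AddCommGroup V] [Module A V] {σ : A →+* A}
  {B : V →ₛₗ[σ] V →ₗ[A] A} {b : ι → V}

lemma isCompl_span_range_orthogonalBilin [Finite ι] (hb : B.IsOrthoᵢ b)
    (hunit : ∀ i, IsUnit (B (b i) (b i))) :
    IsCompl (span A (Set.range b)) ((span A (Set.range b)).orthogonalBilin B) := by
  cases nonempty_fintype ι
  constructor
  · refine disjoint_def.mpr fun v hv hv' => ?_
    obtain ⟨c, rfl⟩ := mem_span_range_iff_exists_fun A |>.mp hv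
    have hc (i : ι) : c i = 0 := by
      have hi := mem_orthogonalBilin_span_range_iff.mp hv' i
      rwa [apply_sum_smul_of_isOrthoᵢ hb, (hunit i).mul_left_eq_zero] at hi
    simp [hc]
  · refine codisjoint_iff_exists_add_eq.mpr fun v => ?_
    let p := ∑ i, (B (b i) v * Ring.inverse (B (b i) (b i))) • b i
    refine ⟨p, v - p, mem_span_range_iff_exists_fun A |>.mpr ⟨_, rfl⟩,
      mem_orthogonalBilin_span_range_iff.mpr fun j => ?_, add_sub_cancel p v⟩
    rw [map_sub, apply_sum_smul_of_isOrthoᵢ hb, Ring.inverse_mul_cancel_right _ _ (hunit j),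
      sub_self]

end OrthogonalSplitting

section Flat

variable {A M : Type*} [CommRing A] [AddCommGroup M] [Module A M] [Flat A M]

lemma exists_eq_smul_of_smul_eq_zero_of_flat {r s : A} (hrs : ∀ a, r * a = 0 → s ∣ a) {x : M}
    (hx : r • x = 0) : ∃ y : M, x = s • y := by
  obtain ⟨k, a, y, hxy, ha⟩ :=
    Flat.isTrivialRelation_of_sum_smul_eq_zero (f := fun _ : Unit => r) (x := fun _ => x)
      (by simpa using hx)
  choose c hc using fun j => hrs (a () j) (by simpa using ha j)
  refine ⟨∑ j, c j • y j, ?_⟩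
  calc
    x = ∑ j, a () j • y j := hxy ()
    _ = s • ∑ j, c j • y j := by simp only [hc, mul_smul, Finset.smul_sum]

lemma flat_of_isCompl {N N' : Submodule A M} (h : IsCompl N N') : Flat A N :=
  Flat.of_retract N.subtype (N.projectionOnto N' h) (projectionOnto_comp_subtype h)

end Flat

section DualNumber

lemma eps_mul_eq_zero_iff {R : Type*} [Semiring R] {z : R[ε]} : ε * z = 0 ↔ fst z = 0 := by
  simp [TrivSqZeroExt.ext_iff]

variable {R : Type*} [CommRing R]

variable (R) in
/-- The conjugation `a + bε ↦ a - bε` of the dual numbers over a commutative ring, as a ring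
homomorphism; for `R = ℝ` it is `dualConj`. -/
def dualNumberConj : R[ε] →+* R[ε] :=
  (TrivSqZeroExt.map (-LinearMap.id)).toRingHom

@[simp]
lemma fst_dualNumberConj (z : R[ε]) : fst (dualNumberConj R z) = fst z :=
  fst_map _ z

@[simp]
lemma snd_dualNumberConj (z : R[ε]) : snd (dualNumberConj R z) = -snd z :=
  snd_map _ z

lemma dualConj_eq_dualNumberConj (z : ℝ[ε]) : dualConj z = dualNumberConj ℝ z := by
  ext <;> simp [dualConj]

lemma fst_eq_zero_of_dualNumberConj_eq_neg (h2 : (2 : R) ∈ R⁰) {z : R[ε]}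
    (hz : dualNumberConj R z = -z) : fst z = 0 := by
  have hfst : fst z = -fst z := by simpa using congrArg fst hz
  rwa [eq_neg_iff_add_eq_zero, ← two_mul, mul_left_mem_nonZeroDivisors_eq_zero_iff h2] at hfst

variable {V : Type*} [AddCommGroup V] [Module R[ε] V] [Flat R[ε] V]
  {B : V →ₛₗ[dualNumberConj R] V →ₗ[R[ε]] R[ε]}

lemma subsingleton_of_isAlt_of_isSymm_dualNumberConj (h2 : (2 : R) ∈ R⁰) (halt : B.IsAlt)
    (hsymm : B.IsSymm) (hB : B.SeparatingRight) : Subsingleton V := by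
  have heps (w : V) : (ε : R[ε]) • w = 0 := by
    refine hB _ fun v => ?_
    rw [map_smul, smul_eq_mul, eps_mul_eq_zero_iff]
    exact fst_eq_zero_of_dualNumberConj_eq_neg h2 ((hsymm.eq v w).trans (halt.neg v w).symm)
  refine subsingleton_of_forall_eq 0 fun w => ?_
  obtain ⟨w', rfl⟩ := exists_eq_smul_of_smul_eq_zero_of_flat
    (fun a ha => DualNumber.fst_eq_zero_iff_eps_dvd.mp (eps_mul_eq_zero_iff.mp ha)) (heps w)
  exact heps w'

theorem exists_orthogonal_nonnull_dualNumber_general {ι : Type*} [Finite ι] {b : ι → V}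
    (h2 : (2 : R) ∈ R⁰) (hsymm : B.IsSymm) (hB : B.SeparatingRight) (hb : B.IsOrthoᵢ b)
    (hunit : ∀ i, IsUnit (B (b i) (b i))) (hspan : span R[ε] (Set.range b) ≠ ⊤) :
    ∃ u : V, B u u ≠ 0 ∧ ∀ i, B (b i) u = 0 := by
  have hcompl := isCompl_span_range_orthogonalBilin hb hunit
  set W := (span R[ε] (Set.range b)).orthogonalBilin B
  by_contra! hnull
  have halt : (B.domRestrict₁₂ W W).IsAlt := fun w => by
    by_contra hw
    obtain ⟨i, hi⟩ := hnull w hw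
    exact hi (mem_orthogonalBilin_span_range_iff.mp w.2 i)
  have : Flat R[ε] W := flat_of_isCompl hcompl.symm
  have : Subsingleton W := subsingleton_of_isAlt_of_isSymm_dualNumberConj h2 halt
    (hsymm.domRestrict W)
    (separatingRight_domRestrict_orthogonalBilin hcompl.codisjoint hB)
  have hW : W = ⊥ := subsingleton_iff_eq_bot.mp this
  exact hspan (eq_top_of_isCompl_bot (hW ▸ hcompl))

end DualNumber

section HermitianForm

variable {A V : Type*} [CommSemiring A] [AddCommMonoid V] [Module A V] (σ : A →+* A)
  (B : V → V → A) (hadd : ∀ u v w, B (u + v) w = B u w + B v w)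
  (hsmul : ∀ (z : A) (u v : V), B (z • u) v = z * B u v) (hconj : ∀ u v, σ (B u v) = B v u)

/-- A `σ`-Hermitian form, linear in its first argument, as a bundled sesquilinear map. The
arguments are exchanged, since `LinearMap.IsSymm` is stated for maps that are semilinear in the
first argument and linear in the second. -/
def sesquilinearOfHermitian : V →ₛₗ[σ] V →ₗ[A] A :=
  LinearMap.mk₂'ₛₗ σ (RingHom.id A) (fun u v => B v u)
    (fun u v w => by simp only [← hconj _ w, hadd, map_add])
    (fun z u v => by simp only [← hconj _ v, hsmul, map_mul, smul_eq_mul])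
    (fun u v w => hadd v w u)
    (fun z u v => hsmul z v u)

lemma isSymm_sesquilinearOfHermitian :
    (sesquilinearOfHermitian σ B hadd hsmul hconj).IsSymm :=
  ⟨fun u v => hconj v u⟩

end HermitianForm

/-- Given a non-degenerate Hermitian form on a finite free module over the dual
numbers and an orthonormal family spanning a proper submodule, there is a
nonnull vector orthogonal to the family. -/
theorem exists_orthogonal_nonnull_dualNumber
    (V : Type*) [AddCommGroup V] [Module (DualNumber ℝ) V]
    [Module.Finite (DualNumber ℝ) V] [Module.Free (DualNumber ℝ) V]
    (B : V → V → DualNumber ℝ)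
    (hadd : ∀ u v w : V, B (u + v) w = B u w + B v w)
    (hsmul : ∀ (z : DualNumber ℝ) (u v : V), B (z • u) v = z * B u v)
    (hconj : ∀ u v : V, dualConj (B u v) = B v u)
    (hnd : ∀ u : V, (∀ v : V, B u v = 0) → u = 0)
    (m : ℕ) (b : Fin m → V)
    (hnorm : ∀ i, B (b i) (b i) = 1 ∨ B (b i) (b i) = -1)
    (horth : ∀ i j, i ≠ j → B (b i) (b j) = 0)
    (hspan : Submodule.span (DualNumber ℝ) (Set.range b) ≠ ⊤) :
    ∃ u : V, B u u ≠ 0 ∧ ∀ i, B (b i) u = 0 := by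
  have hconj' (u v : V) : dualNumberConj ℝ (B u v) = B v u :=
    dualConj_eq_dualNumberConj (B u v) ▸ hconj u v
  have hunit (i : Fin m) : IsUnit (B (b i) (b i)) := by
    rcases hnorm i with h | h <;> simp [h]
  have hsymm := isSymm_sesquilinearOfHermitian (dualNumberConj ℝ) B hadd hsmul hconj'
  obtain ⟨u, hu, hbu⟩ := exists_orthogonal_nonnull_dualNumber_general (by simp) hsymm hnd
    (fun i j hij => horth j i hij.symm) hunit hspan
  exact ⟨u, hu, fun i => hsymm.isRefl (b i) u (hbu i)⟩
end
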